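/- Let i ∈ {1,2}. Suppose that the following statements are all true: (a) T(71, 0; 96, 96, 96); (b) T(n, 96; t(n−24), t(n−24), 0) for every n ∈ {56, …, 79}; (c) T(n, t(n); s_i(n−24), 0, 0) for every n ∈ {32, …, 55}; and (d) T(n, s_i(n); 0, 0, 0) for every n ∈ {8, …, 31}. Then T(n, s_i(n); 0, 0, 0) is true for every n ≥ 8; i.e., for every n ≥ 8 there exist ℓ_1, m_1, …, ℓ_{s_i(n)}, m_{s_i(n)} ∈ ℂ^{n+1} with dim_ℂ Σ_{j=1}^{s_i(n)} (ℓ_j²·U + ℓ_j·m_j·U) = min{(2n+1)·s_i(n), C(n+3,3)}. -/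

import Mathlib

open MvPolynomial

/-- The linear form associated with a coefficient vector `v ∈ ℂ^{n+1}`. -/
noncomputable def lin {n : ℕ} (v : Fin (n + 1) → ℂ) : MvPolynomial (Fin (n + 1)) ℂ :=
  ∑ j, MvPolynomial.C (v j) * MvPolynomial.X j

/-- The subspace `f·U = {f·u : u ∈ U}` of the polynomial ring, where `U` is the
space of linear forms. -/
noncomputable def mulU {n : ℕ} (f : MvPolynomial (Fin (n + 1)) ℂ) :
    Submodule ℂ (MvPolynomial (Fin (n + 1)) ℂ) :=
  Submodule.span ℂ (Set.range fun j : Fin (n + 1) => f * MvPolynomial.X j)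

/-- The affine cone `ℓ^{d-1}·U + ℓ^{d-2}·m·U` over the tangent space to the tangential
variety `T_{n,d}` of the `d`-th Veronese variety at the point `[ℓ^{d-1} m]`. -/
noncomputable def tanCone {n : ℕ} (d : ℕ) (ℓ m : Fin (n + 1) → ℂ) :
    Submodule ℂ (MvPolynomial (Fin (n + 1)) ℂ) :=
  mulU (lin ℓ ^ (d - 1)) ⊔ mulU (lin ℓ ^ (d - 2) * lin m)

/-- `v ∈ U_{i+1}`, i.e. the coordinates of `v` indexed by `{24i, …, 24i+23}` vanish. -/
def memU {n : ℕ} (i : Fin 3) (v : Fin (n + 1) → ℂ) : Prop :=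
  ∀ j : Fin (n + 1), 24 * (i : ℕ) ≤ (j : ℕ) → (j : ℕ) < 24 * (i : ℕ) + 24 → v j = 0

/-- `S_3(U_{i+1})`: the span of all products of three linear forms belonging to `U_{i+1}`. -/
noncomputable def S3U {n : ℕ} (i : Fin 3) : Submodule ℂ (MvPolynomial (Fin (n + 1)) ℂ) :=
  Submodule.span ℂ
    {p | ∃ a b c : Fin (n + 1) → ℂ,
      memU i a ∧ memU i b ∧ memU i c ∧ p = lin a * lin b * lin c}

/-- `v ∈ U_K`, the span of the variables `x_0, …, x_71`. -/
def memK {n : ℕ} (v : Fin (n + 1) → ℂ) : Prop :=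
  ∀ j : Fin (n + 1), 72 ≤ (j : ℕ) → v j = 0

/-- `S_3(U_K)`: the span of all products of three linear forms in `x_0, …, x_71`. -/
noncomputable def S3K (n : ℕ) : Submodule ℂ (MvPolynomial (Fin (n + 1)) ℂ) :=
  Submodule.span ℂ
    {p | ∃ a b c : Fin (n + 1) → ℂ,
      memK a ∧ memK b ∧ memK c ∧ p = lin a * lin b * lin c}

/-- The alternating sum `Σ_{j=1}^k (−1)^{j−1} C(k,j) · C(n−24j+3, 3)` (with the convention
`C(m,3) = 0` for `m < 3`, realized by truncated subtraction `n+3−24j`). -/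
def altsum (n k : ℕ) : ℤ :=
  ∑ j ∈ Finset.Icc 1 k, (-1 : ℤ) ^ (j - 1) * (k.choose j : ℤ) * ((n + 3 - 24 * j).choose 3 : ℤ)

/-- `k = #{i : a_i ≠ 0}`. -/
def kcount (a : Fin 3 → ℕ) : ℕ := (Finset.univ.filter fun i => a i ≠ 0).card

/-- The expected dimension `w(n, s; a_1, a_2, a_3)`, as an integer. -/
def expdimZ (n s : ℕ) (a : Fin 3 → ℕ) : ℤ :=
  min (altsum n (kcount a) + 48 * ((a 0 + a 1 + a 2 : ℕ) : ℤ) + (2 * n + 1) * s)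
    (((n + 3).choose 3 : ℤ))

/-- The subspace `W(n, s; a_1, a_2, a_3)` determined by the given points. -/
noncomputable def Wspace {n s : ℕ} {a : Fin 3 → ℕ}
    (ℓ m : Fin s → Fin (n + 1) → ℂ)
    (ℓ' m' : (i : Fin 3) → Fin (a i) → Fin (n + 1) → ℂ) :
    Submodule ℂ (MvPolynomial (Fin (n + 1)) ℂ) :=
  (⨆ i : {i : Fin 3 // a i ≠ 0},
      (S3U i.1 ⊔ ⨆ j : Fin (a i.1), tanCone 3 (ℓ' i.1 j) (m' i.1 j)))
    ⊔ ⨆ i : Fin s, tanCone 3 (ℓ i) (m i)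

/-- The statement `T(n, s; a_1, a_2, a_3)`: some choice of points realizes the expected
dimension `w(n, s; a_1, a_2, a_3)`. -/
def TStmt (n s : ℕ) (a : Fin 3 → ℕ) : Prop :=
  ∃ (ℓ m : Fin s → Fin (n + 1) → ℂ)
    (ℓ' m' : (i : Fin 3) → Fin (a i) → Fin (n + 1) → ℂ),
    (∀ (i : Fin 3) (j : Fin (a i)), memU i (ℓ' i j) ∧ memU i (m' i j)) ∧
    (Module.finrank ℂ (Wspace ℓ m ℓ' m') : ℤ) = expdimZ n s a

/-- `s_1(n) = 48k² + (11+4r)k + ⌊(4r²+22r+33)/48⌋` where `n = 24k + r`. -/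
def s1 (n : ℕ) : ℕ :=
  48 * (n / 24) ^ 2 + (11 + 4 * (n % 24)) * (n / 24) +
    (4 * (n % 24) ^ 2 + 22 * (n % 24) + 33) / 48

/-- `s_2(n) = s_1(n) + 1`. -/
def s2 (n : ℕ) : ℕ := s1 n + 1

/-- `t(n) = 4n − 37`. -/
def tfun (n : ℕ) : ℕ := 4 * n - 37

/-- The expected codimension `c(n)` of `W(n, t(n); s_1(n−24), 0, 0)`. -/
def cInt (n : ℕ) : ℤ :=
  ((n + 3).choose 3 : ℤ) - ((n - 21).choose 3 : ℤ) - (tfun n : ℤ) * (2 * n + 1) -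
    48 * (s1 (n - 24) : ℤ)

/-!
Move some of the points of a configuration in `n + 24` dimensions into the space `U_i` of linear
forms that avoid a block of `24` variables. The span `W` of the configuration then satisfies
`dim W + dim S_3(U_i) = dim (W ∩ S_3(U_i)) + dim (W + S_3(U_i)) ≥ dim A + dim B`, where `A` is the
span in `n` dimensions of the configuration of the moved points, and `B = W + S_3(U_i)` is that of a
configuration with one more active block. Attaining a prescribed dimension is an open condition on
the points, so on the line joining a configuration good for `A` to one good for `B` some
configuration is good for both. By Pascal's rule the expected dimensions add up in the same way; the
truncation by the dimension of the space of all cubics is harmless as long as the two expected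
dimensions are truncated together, or neither of them is.

With all three blocks active nothing is left to move: a cubic monomial with a variable outside the
blocks avoids one of them, so `T(71, 0; 96, 96, 96)` alone settles every `n ≥ 71`. Removing the
active blocks one at a time gives three inductions with step `24`, each of which uses the preceding
level and starts from `24` consecutive base cases.
-/

/-! ### Lower semicontinuity of the rank -/

section Semicontinuity

variable {K A : Type*} [Field K] [CommRing A] [Algebra K A]

theorem exists_polynomial_eval_eq_dual (g : Module.Dual K A) (q : Polynomial A) :
    ∃ P : Polynomial K, ∀ t, P.eval t = g (q.eval (algebraMap K A t)) := by
  induction q using Polynomial.induction_on' with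
  | add q₁ q₂ h₁ h₂ =>
    obtain ⟨P₁, h₁⟩ := h₁
    obtain ⟨P₂, h₂⟩ := h₂
    exact ⟨P₁ + P₂, fun t => by simp [h₁, h₂]⟩
  | monomial k a =>
    refine ⟨Polynomial.monomial k (g a), fun t => ?_⟩
    rw [Polynomial.eval_monomial, Polynomial.eval_monomial, ← map_pow, mul_comm a,
      ← Algebra.smul_def, map_smul, smul_eq_mul, mul_comm]

theorem exists_dual_family_of_linearIndependent {ι M : Type*} [Finite ι] [DecidableEq ι]
    [AddCommGroup M] [Module K M] {v : ι → M} (hv : LinearIndependent K v) :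
    ∃ g : ι → Module.Dual K M, ∀ i j, g j (v i) = (1 : Matrix ι ι K) i j := by
  have := Fintype.ofFinite ι
  obtain ⟨g, hg⟩ := (Fintype.linearCombination K v).exists_leftInverse_of_injective
    (LinearMap.ker_eq_bot.mpr
      (linearIndependent_iff_injective_fintypeLinearCombination.mp hv))
  refine ⟨fun j => LinearMap.proj j ∘ₗ g, fun i j => ?_⟩
  have := congrArg (fun L => L (Pi.single i (1 : K)) j) hg
  simpa [Fintype.linearCombination_apply_single, Pi.single_apply, Matrix.one_apply, eq_comm]
    using this

theorem finite_setOf_not_linearIndependent_eval {ι : Type*} [Finite ι] (q : ι → Polynomial A)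
    {t₀ : K} (h₀ : LinearIndependent K fun i => (q i).eval (algebraMap K A t₀)) :
    {t : K | ¬ LinearIndependent K fun i => (q i).eval (algebraMap K A t)}.Finite := by
  classical
  have := Fintype.ofFinite ι
  obtain ⟨g, hg⟩ := exists_dual_family_of_linearIndependent h₀
  choose P hP using fun i j => exists_polynomial_eval_eq_dual (g j) (q i)
  have eval_det (t : K) : (Matrix.of P).det.eval t =
      (Matrix.of fun i j => g j ((q i).eval (algebraMap K A t))).det := by
    rw [← Polynomial.coe_evalRingHom, RingHom.map_det]
    congr 1
    ext i j
    exact hP i j t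
  have det_ne_zero : (Matrix.of P).det ≠ 0 := by
    intro h
    have h₁ := eval_det t₀
    simp only [hg, h, Polynomial.eval_zero] at h₁
    exact one_ne_zero (Matrix.det_one.symm.trans h₁.symm)
  refine (Polynomial.finite_setOfPred_isRoot det_ne_zero).subset fun t ht => ?_
  by_contra hroot
  refine ht (LinearIndependent.of_comp (LinearMap.pi g) ?_)
  exact Matrix.linearIndependent_rows_of_det_ne_zero ((eval_det t).symm.trans_ne hroot)

theorem finite_setOf_finrank_eval_lt {κ : Type*} (q : κ → Polynomial A)
    (hfin : ∀ t : K, FiniteDimensional K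
      (Submodule.span K (Set.range fun k => (q k).eval (algebraMap K A t)))) (t₀ : K) :
    {t : K | (Set.range fun k => (q k).eval (algebraMap K A t)).finrank K <
      (Set.range fun k => (q k).eval (algebraMap K A t₀)).finrank K}.Finite := by
  have := hfin t₀
  obtain ⟨f, hf, -, hli⟩ := Submodule.exists_fun_fin_finrank_span_eq K
    (Set.range fun k => (q k).eval (algebraMap K A t₀))
  choose k hk using hf
  simp only [← funext hk] at hli
  refine (finite_setOf_not_linearIndependent_eval (fun i => q (k i)) hli).subset ?_
  intro t (ht : Set.finrank K _ < Set.finrank K _) hind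
  have := hfin t
  have hle := Submodule.finrank_mono (R := K) (Submodule.span_mono
    (Set.range_comp_subset_range k fun k => (q k).eval (algebraMap K A t)))
  have hcard := finrank_span_eq_card hind
  rw [Fintype.card_fin] at hcard
  exact ht.not_ge (hcard.symm.le.trans hle)

end Semicontinuity

/-! ### Linear and cubic forms -/

section Forms

variable {n : ℕ}

theorem lin_eq_linearCombination (v : Fin (n + 1) → ℂ) :
    lin v = Fintype.linearCombination ℂ (X : Fin (n + 1) → MvPolynomial (Fin (n + 1)) ℂ) v := by
  simp only [lin, Fintype.linearCombination_apply, smul_eq_C_mul]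

theorem lin_lineMap (v w : Fin (n + 1) → ℂ) (t : ℂ) :
    lin (AffineMap.lineMap v w t) = lin v + C t * (lin w - lin v) := by
  simp only [lin_eq_linearCombination, AffineMap.lineMap_apply_module', map_add, map_smul,
    map_sub, smul_eq_C_mul, add_comm]

theorem lin_single (j : Fin (n + 1)) : lin (Pi.single j (1 : ℂ)) = X j := by
  rw [lin_eq_linearCombination, Fintype.linearCombination_apply_single, one_smul]

theorem lin_isHomogeneous (v : Fin (n + 1) → ℂ) : (lin v).IsHomogeneous 1 :=
  IsHomogeneous.sum _ _ _ fun j _ => isHomogeneous_C_mul_X (v j) j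

theorem lin_mul_lin_mul_lin_isHomogeneous (u v w : Fin (n + 1) → ℂ) :
    (lin u * lin v * lin w).IsHomogeneous 3 :=
  ((lin_isHomogeneous u).mul (lin_isHomogeneous v)).mul (lin_isHomogeneous w)

instance finiteDimensional_homogeneousSubmodule (d : ℕ) :
    FiniteDimensional ℂ (homogeneousSubmodule (Fin (n + 1)) ℂ d) :=
  Module.Finite.iff_fg.mpr (homogeneousSubmodule_fg (R := ℂ) (σ := Fin (n + 1)) d)

theorem finrank_homogeneousSubmodule (d : ℕ) :
    Module.finrank ℂ (homogeneousSubmodule (Fin (n + 1)) ℂ d) = (n + d).choose d := by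
  classical
  have hsupp : homogeneousSubmodule (Fin (n + 1)) ℂ d =
      restrictSupport ℂ {e : Fin (n + 1) →₀ ℕ | e.degree = d} :=
    homogeneousSubmodule_eq_finsupp_supported _ _ _
  have e : {e : Fin (n + 1) →₀ ℕ | e.degree = d} ≃ Sym (Fin (n + 1)) d :=
    (Sym.equivNatSum (Fin (n + 1)) d).symm
  rw [hsupp, Module.finrank_eq_card_basis ((basisRestrictSupport ℂ _).reindex e),
    Sym.card_sym_eq_choose, Fintype.card_fin, Nat.add_right_comm, Nat.add_sub_cancel]

theorem homogeneousSubmodule_three_le {W : Submodule ℂ (MvPolynomial (Fin (n + 1)) ℂ)}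
    (h : ∀ a b c, X a * X b * X c ∈ W) : homogeneousSubmodule (Fin (n + 1)) ℂ 3 ≤ W := by
  rw [← homogeneousSubmodule_one_pow, homogeneousSubmodule_one_eq_span_X, pow_three',
    Submodule.span_mul_span, Submodule.span_mul_span, Submodule.span_le]
  rintro _ ⟨_, ⟨_, ⟨a, rfl⟩, _, ⟨b, rfl⟩, rfl⟩, _, ⟨c, rfl⟩, rfl⟩
  exact h a b c

end Forms

/-! ### Sums of tangent cones -/

/-- A pair `(ℓ, m)` of coefficient vectors, standing for the point `[ℓ^{d-1} m]` of the tangential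
variety. Pairs, rather than two separate families, let families of points be interpolated, pushed
forward and concatenated in one go. -/
abbrev TangentPoint (n : ℕ) : Type := (Fin (n + 1) → ℂ) × (Fin (n + 1) → ℂ)

/-- The sum of the affine tangent cones at the points of a family, i.e. the space
`Σ_i (ℓ_i^{d-1}·U + ℓ_i^{d-2}·m_i·U)`. -/
noncomputable def tangentSum {n : ℕ} {ι : Type*} (d : ℕ) (p : ι → TangentPoint n) :
    Submodule ℂ (MvPolynomial (Fin (n + 1)) ℂ) :=
  ⨆ i, tanCone d (p i).1 (p i).2

section TangentSum

variable {n : ℕ} {ι : Type*}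

instance finiteDimensional_mulU (f : MvPolynomial (Fin (n + 1)) ℂ) :
    FiniteDimensional ℂ (mulU f) :=
  FiniteDimensional.span_of_finite ℂ (Set.finite_range _)

instance finiteDimensional_tanCone (d : ℕ) (ℓ m : Fin (n + 1) → ℂ) :
    FiniteDimensional ℂ (tanCone d ℓ m) :=
  Submodule.finiteDimensional_sup _ _

instance finiteDimensional_tangentSum [Finite ι] (d : ℕ) (p : ι → TangentPoint n) :
    FiniteDimensional ℂ (tangentSum d p) :=
  Submodule.finiteDimensional_iSup _

theorem mulU_le_homogeneousSubmodule {f : MvPolynomial (Fin (n + 1)) ℂ} {d : ℕ}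
    (hf : f.IsHomogeneous d) : mulU f ≤ homogeneousSubmodule (Fin (n + 1)) ℂ (d + 1) := by
  rw [mulU, Submodule.span_le]
  rintro _ ⟨j, rfl⟩
  exact hf.mul (isHomogeneous_X ℂ j)

theorem tangentSum_le_homogeneousSubmodule {d : ℕ} (hd : 2 ≤ d) (p : ι → TangentPoint n) :
    tangentSum d p ≤ homogeneousSubmodule (Fin (n + 1)) ℂ d := by
  obtain ⟨e, rfl⟩ := Nat.exists_eq_add_of_le' hd
  refine iSup_le fun i => sup_le (mulU_le_homogeneousSubmodule ?_)
    (mulU_le_homogeneousSubmodule ?_)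
  · simpa using (lin_isHomogeneous (p i).1).pow (e + 1)
  · simpa using ((lin_isHomogeneous (p i).1).pow e).mul (lin_isHomogeneous (p i).2)

theorem mulU_eq_range (f : MvPolynomial (Fin (n + 1)) ℂ) :
    mulU f = LinearMap.range (LinearMap.mulLeft ℂ f ∘ₗ Fintype.linearCombination ℂ X) := by
  rw [LinearMap.range_comp, Fintype.range_linearCombination, Submodule.map_span,
    ← Set.range_comp]
  rfl

/-- Both summands of the cone contain `ℓ^{d-1} m`, so one dimension is lost. -/
theorem finrank_tanCone_le {d : ℕ} (hd : 2 ≤ d) (ℓ m : Fin (n + 1) → ℂ) :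
    Module.finrank ℂ (tanCone d ℓ m) ≤ 2 * n + 1 := by
  have hpow : lin ℓ ^ (d - 1) = lin ℓ ^ (d - 2) * lin ℓ := by
    rw [← pow_succ]
    congr 1
    lia
  by_cases hzero : (m, -ℓ) = 0
  · obtain ⟨rfl, hℓ⟩ := Prod.mk_eq_zero.mp hzero
    obtain rfl := neg_eq_zero.mp hℓ
    have hbot : tanCone d (0 : Fin (n + 1) → ℂ) 0 = ⊥ := by
      simp [tanCone, mulU, lin_eq_linearCombination, show d - 1 ≠ 0 by lia]
    rw [hbot, finrank_bot]
    exact Nat.zero_le _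
  let mulPair (f : MvPolynomial (Fin (n + 1)) ℂ) :=
    LinearMap.mulLeft ℂ f ∘ₗ Fintype.linearCombination ℂ (X : Fin (n + 1) → _)
  let L := (mulPair (lin ℓ ^ (d - 1))).coprod (mulPair (lin ℓ ^ (d - 2) * lin m))
  have hrange : LinearMap.range L = tanCone d ℓ m := by
    rw [LinearMap.range_coprod, tanCone, mulU_eq_range, mulU_eq_range]
  have hker : (m, -ℓ) ∈ LinearMap.ker L := by
    rw [LinearMap.mem_ker, LinearMap.coprod_apply]
    simp only [mulPair, LinearMap.comp_apply, LinearMap.mulLeft_apply, map_neg,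
      ← lin_eq_linearCombination, hpow]
    ring
  have hker_pos : 0 < Module.finrank ℂ (LinearMap.ker L) := by
    have : Nontrivial (LinearMap.ker L) :=
      ⟨⟨(m, -ℓ), hker⟩, 0, fun h => hzero (congrArg Subtype.val h)⟩
    exact Module.finrank_pos
  have hrank := L.finrank_range_add_finrank_ker
  rw [Module.finrank_prod, Module.finrank_fin_fun] at hrank
  rw [← hrange]
  lia

theorem finrank_finset_sup_le {K M : Type*} [Field K] [AddCommGroup M] [Module K M]
    (s : Finset ι) (V : ι → Submodule K M) [∀ i, FiniteDimensional K (V i)] {c : ℕ}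
    (hV : ∀ i, Module.finrank K (V i) ≤ c) : Module.finrank K ↥(s.sup V) ≤ s.card * c := by
  induction s using Finset.cons_induction with
  | empty => simp
  | cons i s hi ih =>
    rw [Finset.sup_cons, Finset.card_cons, add_one_mul, add_comm]
    exact (Submodule.finrank_add_le_finrank_add_finrank _ _).trans (add_le_add (hV i) ih)

theorem finrank_tangentSum_le [Fintype ι] {d : ℕ} (hd : 2 ≤ d) (p : ι → TangentPoint n) :
    Module.finrank ℂ (tangentSum d p) ≤ Fintype.card ι * (2 * n + 1) := by
  rw [tangentSum, ← Finset.sup_univ_eq_iSup]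
  exact finrank_finset_sup_le _ _ fun i => finrank_tanCone_le hd _ _

theorem tangentSum_append {s t : ℕ} (d : ℕ) (p : Fin s → TangentPoint n)
    (q : Fin t → TangentPoint n) :
    tangentSum d (Fin.append p q) = tangentSum d p ⊔ tangentSum d q := by
  rw [tangentSum, ← finSumFinEquiv.iSup_comp, iSup_sum]
  simp only [finSumFinEquiv_apply_left, finSumFinEquiv_apply_right, Fin.append_left,
    Fin.append_right]
  rfl

theorem sup_tangentSum_eq_span (F : Submodule ℂ (MvPolynomial (Fin (n + 1)) ℂ)) (d : ℕ)
    (p : ι → TangentPoint n) :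
    F ⊔ tangentSum d p = Submodule.span ℂ (Set.range (Sum.elim ((↑) : F → MvPolynomial _ ℂ)
      (Sum.elim (fun k : ι × Fin (n + 1) => lin (p k.1).1 ^ (d - 1) * X k.2)
        fun k : ι × Fin (n + 1) => lin (p k.1).1 ^ (d - 2) * lin (p k.1).2 * X k.2))) := by
  rw [Set.Sum.elim_range, Set.Sum.elim_range, Submodule.span_union, Submodule.span_union,
    Subtype.range_coe, Submodule.span_eq, tangentSum]
  simp only [tanCone, mulU, iSup_sup_eq, Submodule.span_range_eq_iSup, iSup_prod]

/-- The generators of `F ⊔ tangentSum d p` depend polynomially on the points. -/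
theorem finite_setOf_finrank_sup_tangentSum_lt [Finite ι]
    (F : Submodule ℂ (MvPolynomial (Fin (n + 1)) ℂ)) [FiniteDimensional ℂ F] (d : ℕ)
    (p q : ι → TangentPoint n) (t₀ : ℂ) :
    {t : ℂ | Module.finrank ℂ ↥(F ⊔ tangentSum d (AffineMap.lineMap p q t)) <
      Module.finrank ℂ ↥(F ⊔ tangentSum d (AffineMap.lineMap p q t₀))}.Finite := by
  let line (v w : Fin (n + 1) → ℂ) : Polynomial (MvPolynomial (Fin (n + 1)) ℂ) :=
    Polynomial.C (lin v) + Polynomial.X * Polynomial.C (lin w - lin v)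
  let generator : F ⊕ (ι × Fin (n + 1)) ⊕ (ι × Fin (n + 1)) → Polynomial (MvPolynomial _ ℂ) :=
    Sum.elim (fun f => Polynomial.C f) (Sum.elim
      (fun k => line (p k.1).1 (q k.1).1 ^ (d - 1) * Polynomial.C (X k.2))
      fun k => line (p k.1).1 (q k.1).1 ^ (d - 2) * line (p k.1).2 (q k.1).2 *
        Polynomial.C (X k.2))
  have eval_line (v w : Fin (n + 1) → ℂ) (t : ℂ) :
      (line v w).eval (algebraMap ℂ _ t) = lin (AffineMap.lineMap v w t) := by
    simp only [line, lin_lineMap, algebraMap_eq, Polynomial.eval_add, Polynomial.eval_mul,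
      Polynomial.eval_C, Polynomial.eval_X]
  have span_generator (t : ℂ) :
      Submodule.span ℂ (Set.range fun k => (generator k).eval (algebraMap ℂ _ t)) =
        F ⊔ tangentSum d (AffineMap.lineMap p q t) := by
    rw [sup_tangentSum_eq_span]
    congr 2
    ext1 k
    rcases k with f | k | k <;>
      simp only [generator, Sum.elim_inl, Sum.elim_inr, Polynomial.eval_mul, Polynomial.eval_pow,
        Polynomial.eval_C, eval_line, AffineMap.pi_lineMap_apply, AffineMap.fst_lineMap,
        AffineMap.snd_lineMap]
  have finrank_generator (t : ℂ) :
      (Set.range fun k => (generator k).eval (algebraMap ℂ _ t)).finrank ℂ =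
        Module.finrank ℂ ↥(F ⊔ tangentSum d (AffineMap.lineMap p q t)) := by
    rw [Set.finrank, span_generator]
  have hfinite := finite_setOf_finrank_eval_lt generator
    (fun t => by rw [span_generator]; infer_instance) t₀
  simpa only [finrank_generator] using hfinite

end TangentSum

/-! ### Pushing points forward along inclusions of variables -/

/-- The map on points induced by an inclusion `e` of variables, both vectors of a point being
extended by zero. -/
noncomputable def extendPoint {m n : ℕ} (e : Fin (m + 1) → Fin (n + 1)) :
    TangentPoint m →ₗ[ℂ] TangentPoint n :=
  (Function.ExtendByZero.linearMap ℂ e).prodMap (Function.ExtendByZero.linearMap ℂ e)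

section Extension

variable {m n : ℕ} {ι : Type*} {e : Fin (m + 1) → Fin (n + 1)}

theorem lin_extend (he : e.Injective) (v : Fin (m + 1) → ℂ) :
    lin (Function.extend e v 0) = rename e (lin v) := by
  simp only [lin, map_sum, map_mul, rename_C, rename_X]
  refine (Fintype.sum_of_injective e he _ _ (fun j hj => ?_) fun i => ?_).symm
  · rw [Function.extend_apply' _ _ _ hj, Pi.zero_apply, C_0, zero_mul]
  · rw [he.extend_apply]

theorem lin_extendPoint_fst (he : e.Injective) (p : TangentPoint m) :
    lin (extendPoint e p).1 = rename e (lin p.1) :=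
  lin_extend he p.1

theorem lin_extendPoint_snd (he : e.Injective) (p : TangentPoint m) :
    lin (extendPoint e p).2 = rename e (lin p.2) :=
  lin_extend he p.2

theorem map_rename_mulU_le (e : Fin (m + 1) → Fin (n + 1)) (f : MvPolynomial (Fin (m + 1)) ℂ) :
    (mulU f).map (rename e).toLinearMap ≤ mulU (rename e f) := by
  rw [mulU, Submodule.map_span_le]
  rintro _ ⟨j, rfl⟩
  exact Submodule.subset_span ⟨e j, by simp⟩

theorem map_rename_tangentSum_le (he : e.Injective) (d : ℕ) (p : ι → TangentPoint m) :
    (tangentSum d p).map (rename e).toLinearMap ≤ tangentSum d (extendPoint e ∘ p) := by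
  rw [tangentSum, Submodule.map_iSup]
  refine iSup_mono fun i => ?_
  rw [tanCone, Submodule.map_sup]
  refine sup_le_sup ((map_rename_mulU_le e _).trans_eq ?_)
    ((map_rename_mulU_le e _).trans_eq ?_)
  · simp [lin_extendPoint_fst he]
  · simp [lin_extendPoint_fst he, lin_extendPoint_snd he]

theorem finrank_map_rename (he : e.Injective) (W : Submodule ℂ (MvPolynomial (Fin (m + 1)) ℂ)) :
    Module.finrank ℂ (W.map (rename e).toLinearMap) = Module.finrank ℂ W :=
  (Submodule.equivMapOfInjective _ (rename_injective e he) W).finrank_eq.symm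

/-- On the line joining `p` and `q`, all but finitely many members do at least as well as `p` for
`F₁` and at least as well as `q` for `F₂`. -/
theorem exists_finrank_sup_tangentSum_le_and_le [Finite ι] (d : ℕ)
    (F₁ : Submodule ℂ (MvPolynomial (Fin (m + 1)) ℂ)) [FiniteDimensional ℂ F₁]
    (F₂ : Submodule ℂ (MvPolynomial (Fin (n + 1)) ℂ)) [FiniteDimensional ℂ F₂]
    (L : TangentPoint m →ₗ[ℂ] TangentPoint n) (p q : ι → TangentPoint m) :
    ∃ r : ι → TangentPoint m,
      Module.finrank ℂ ↥(F₁ ⊔ tangentSum d p) ≤ Module.finrank ℂ ↥(F₁ ⊔ tangentSum d r) ∧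
      Module.finrank ℂ ↥(F₂ ⊔ tangentSum d (L ∘ q)) ≤
        Module.finrank ℂ ↥(F₂ ⊔ tangentSum d (L ∘ r)) := by
  have comp_lineMap (t : ℂ) :
      L ∘ AffineMap.lineMap p q t = AffineMap.lineMap (L ∘ p) (L ∘ q) t := by
    funext i
    simp only [Function.comp_apply, AffineMap.pi_lineMap_apply]
    exact L.toAffineMap.apply_lineMap (p i) (q i) t
  have hfinite₁ := finite_setOf_finrank_sup_tangentSum_lt F₁ d p q 0
  rw [AffineMap.lineMap_apply_zero] at hfinite₁
  have hfinite₂ := finite_setOf_finrank_sup_tangentSum_lt F₂ d (L ∘ p) (L ∘ q) 1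
  rw [AffineMap.lineMap_apply_one] at hfinite₂
  obtain ⟨t, ht⟩ := (hfinite₁.union hfinite₂).infinite_compl.nonempty
  simp only [Set.mem_compl_iff, Set.mem_union, Set.mem_ofPred_eq, not_or, not_lt] at ht
  exact ⟨AffineMap.lineMap p q t, ht.1, by rw [comp_lineMap]; exact ht.2⟩

end Extension

theorem finrank_add_finrank_le_of_le_inf_of_le_sup {K M : Type*} [Field K] [AddCommGroup M]
    [Module K M] {A B W S : Submodule K M} [FiniteDimensional K W] [FiniteDimensional K S]
    (hA : A ≤ W ⊓ S) (hB : B ≤ W ⊔ S) :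
    Module.finrank K A + Module.finrank K B ≤ Module.finrank K W + Module.finrank K S := by
  rw [← Submodule.finrank_sup_add_finrank_inf_eq W S, add_comm]
  exact add_le_add (Submodule.finrank_mono hB) (Submodule.finrank_mono hA)

/-! ### Blocks of variables -/

/-- The inclusion of variables whose image consists of the variables outside the `k`-th block
`{24k, …, 24k+23}`. -/
def skipBlock (m : ℕ) (k : Fin 3) (j : Fin (m + 1)) : Fin (m + 24 + 1) :=
  if (j : ℕ) < 24 * k then ⟨j, by lia⟩ else ⟨j + 24, by lia⟩

/-- The space `Σ_{i < k} (S_3(U_i) + Σ_j T_{i,j})`, with blocks numbered from `0` and `T_{i,j}`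
the affine tangent cone at the `j`-th point of the `i`-th family. The families `p i` with `k ≤ i`
are ignored. -/
noncomputable def blockSpace {n : ℕ} {ι : Type*} (k : ℕ) (p : Fin 3 → ι → TangentPoint n) :
    Submodule ℂ (MvPolynomial (Fin (n + 1)) ℂ) :=
  ⨆ i : Fin 3, ⨆ _ : (i : ℕ) < k, S3U i ⊔ tangentSum 3 (p i)

section Blocks

variable {m n : ℕ} {ι : Type*}

theorem skipBlock_injective (m : ℕ) (k : Fin 3) : (skipBlock m k).Injective := by
  intro a b h
  simp only [skipBlock] at h
  split_ifs at h <;> simp only [Fin.mk.injEq] at h <;> lia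

theorem mem_range_skipBlock {k : Fin 3} (hm : 24 * (k : ℕ) ≤ m + 1) {j : Fin (m + 24 + 1)} :
    j ∈ Set.range (skipBlock m k) ↔ (j : ℕ) < 24 * k ∨ 24 * (k : ℕ) + 24 ≤ j := by
  constructor
  · rintro ⟨i, rfl⟩
    simp only [skipBlock]
    split_ifs <;> simp only <;> lia
  · rintro (hj | hj)
    · exact ⟨⟨j, by lia⟩, by simp [skipBlock, hj]⟩
    · refine ⟨⟨j - 24, by lia⟩, Fin.ext ?_⟩
      rw [skipBlock, if_neg (by simp only; lia)]
      simp only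
      lia

theorem memU_iff_exists_extend_skipBlock {k : Fin 3} (hm : 24 * (k : ℕ) ≤ m + 1)
    {v : Fin (m + 24 + 1) → ℂ} :
    memU k v ↔ ∃ w, Function.extend (skipBlock m k) w 0 = v := by
  constructor
  · intro hv
    refine ⟨v ∘ skipBlock m k, funext fun j => ?_⟩
    by_cases hj : j ∈ Set.range (skipBlock m k)
    · obtain ⟨i, rfl⟩ := hj
      rw [(skipBlock_injective m k).extend_apply, Function.comp_apply]
    · rw [Function.extend_apply' _ _ _ hj, Pi.zero_apply]
      rw [mem_range_skipBlock hm] at hj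
      exact (hv j (by lia) (by lia)).symm
  · rintro ⟨w, rfl⟩ j h₁ h₂
    refine Function.extend_apply' _ _ _ fun hj => ?_
    have := (mem_range_skipBlock hm).mp hj
    lia

theorem memU_extend_skipBlock_of_lt {i k : Fin 3} (hik : i < k) {v : Fin (m + 1) → ℂ}
    (hv : memU i v) : memU i (Function.extend (skipBlock m k) v 0) := by
  intro j h₁ h₂
  rw [Fin.lt_def] at hik
  by_cases hj : j ∈ Set.range (skipBlock m k)
  · obtain ⟨l, rfl⟩ := hj
    rw [(skipBlock_injective m k).extend_apply]
    simp only [skipBlock] at h₁ h₂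
    split_ifs at h₁ h₂ <;> simp only at h₁ h₂
    · exact hv l h₁ h₂
    · lia
  · exact Function.extend_apply' _ _ _ hj

theorem S3U_le_homogeneousSubmodule (k : Fin 3) :
    S3U k ≤ homogeneousSubmodule (Fin (n + 1)) ℂ 3 := by
  rw [S3U, Submodule.span_le]
  rintro _ ⟨a, b, c, -, -, -, rfl⟩
  exact lin_mul_lin_mul_lin_isHomogeneous a b c

instance finiteDimensional_S3U (k : Fin 3) : FiniteDimensional ℂ (S3U (n := n) k) :=
  Submodule.finiteDimensional_of_le (S3U_le_homogeneousSubmodule k)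

theorem map_rename_S3U_le {k : Fin 3} {e : Fin (m + 1) → Fin (n + 1)} (he : e.Injective)
    (hmem : ∀ v, memU k v → memU k (Function.extend e v 0)) :
    (S3U k).map (rename e).toLinearMap ≤ S3U k := by
  rw [S3U, Submodule.map_span_le]
  rintro _ ⟨a, b, c, ha, hb, hc, rfl⟩
  refine Submodule.subset_span ⟨_, _, _, hmem a ha, hmem b hb, hmem c hc, ?_⟩
  simp [lin_extend he]

theorem S3U_eq_map_rename {k : Fin 3} (hm : 24 * (k : ℕ) ≤ m + 1) :
    S3U k = (homogeneousSubmodule (Fin (m + 1)) ℂ 3).map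
      (rename (skipBlock m k)).toLinearMap := by
  have hinj := skipBlock_injective m k
  apply le_antisymm
  · rw [S3U, Submodule.span_le]
    rintro _ ⟨a, b, c, ha, hb, hc, rfl⟩
    obtain ⟨a, rfl⟩ := (memU_iff_exists_extend_skipBlock hm).mp ha
    obtain ⟨b, rfl⟩ := (memU_iff_exists_extend_skipBlock hm).mp hb
    obtain ⟨c, rfl⟩ := (memU_iff_exists_extend_skipBlock hm).mp hc
    exact ⟨_, lin_mul_lin_mul_lin_isHomogeneous a b c, by simp [lin_extend hinj]⟩
  · rw [Submodule.map_le_iff_le_comap]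
    have hmem (w : Fin (m + 1) → ℂ) := (memU_iff_exists_extend_skipBlock hm).mpr ⟨w, rfl⟩
    refine homogeneousSubmodule_three_le fun a b c => Submodule.subset_span
      ⟨_, _, _, hmem (Pi.single a 1), hmem (Pi.single b 1), hmem (Pi.single c 1), ?_⟩
    simp [lin_extend hinj, lin_single]

theorem finrank_S3U {k : Fin 3} (hm : 24 * (k : ℕ) ≤ m + 1) :
    Module.finrank ℂ (S3U (n := m + 24) k) = (m + 3).choose 3 := by
  rw [S3U_eq_map_rename hm, finrank_map_rename (skipBlock_injective m k),
    finrank_homogeneousSubmodule]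

theorem blockSpace_le_homogeneousSubmodule (k : ℕ) (p : Fin 3 → ι → TangentPoint n) :
    blockSpace k p ≤ homogeneousSubmodule (Fin (n + 1)) ℂ 3 :=
  iSup₂_le fun i _ => sup_le (S3U_le_homogeneousSubmodule i)
    (tangentSum_le_homogeneousSubmodule (by simp) _)

instance finiteDimensional_blockSpace (k : ℕ) (p : Fin 3 → ι → TangentPoint n) :
    FiniteDimensional ℂ (blockSpace k p) :=
  Submodule.finiteDimensional_of_le (blockSpace_le_homogeneousSubmodule k p)

theorem blockSpace_zero (p : Fin 3 → ι → TangentPoint n) : blockSpace 0 p = ⊥ := by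
  simp [blockSpace]

theorem blockSpace_succ (k : Fin 3) (p : Fin 3 → ι → TangentPoint n) :
    blockSpace (k + 1) p = blockSpace k p ⊔ (S3U k ⊔ tangentSum 3 (p k)) := by
  simp only [blockSpace, Nat.lt_succ_iff_lt_or_eq, iSup_or, Fin.val_inj]
  rw [iSup_sup_eq, iSup_iSup_eq_left]

theorem blockSpace_append {s t k : ℕ} (p : Fin 3 → Fin s → TangentPoint n)
    (q : Fin 3 → Fin t → TangentPoint n) :
    blockSpace k (fun i => Fin.append (p i) (q i)) = blockSpace k p ⊔ blockSpace k q := by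
  simp only [blockSpace, tangentSum_append, ← iSup_sup_eq, ← sup_sup_distrib_left]

theorem map_rename_blockSpace_le {e : Fin (m + 1) → Fin (n + 1)} (he : e.Injective) {k : ℕ}
    (hmem : ∀ i : Fin 3, (i : ℕ) < k → ∀ v, memU i v → memU i (Function.extend e v 0))
    (p : Fin 3 → ι → TangentPoint m) :
    (blockSpace k p).map (rename e).toLinearMap ≤
      blockSpace k fun i => extendPoint e ∘ p i := by
  simp only [blockSpace, Submodule.map_iSup, Submodule.map_sup]
  exact iSup₂_mono fun i hi =>
    sup_le_sup (map_rename_S3U_le he (hmem i hi)) (map_rename_tangentSum_le he 3 (p i))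

end Blocks

/-! ### Expected dimensions -/

/-- The dimension of the space of cubic forms in `n + 1` variables, as an integer. -/
def cubicDim (n : ℕ) : ℤ := ((n + 3).choose 3 : ℕ)

/-- The expected dimension before truncation at `cubicDim n`, for `s` points and `a` further points
in each of the first `k` blocks. -/
def virtualDim (n k s a : ℕ) : ℤ := altsum n k + 48 * (k * a) + (2 * n + 1) * s

theorem cubicDim_sub_altsum (n k : ℕ) :
    cubicDim n - altsum n k =
      ∑ j ∈ Finset.range (k + 1),
        (k.choose j : ℤ) * ((-1) ^ j * ((n + 3 - 24 * j).choose 3 : ℕ)) := by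
  rw [Finset.sum_range_succ', altsum, ← Finset.Ico_add_one_right_eq_Icc,
    Finset.sum_Ico_eq_sum_range, cubicDim, sub_eq_neg_add, ← Finset.sum_neg_distrib,
    Nat.add_sub_cancel]
  congr 1
  · refine Finset.sum_congr rfl fun j _ => ?_
    rw [Nat.add_sub_cancel_left, add_comm 1 j]
    ring
  · simp

theorem altsum_zero (n : ℕ) : altsum n 0 = 0 := by simp [altsum]

theorem altsum_succ (m k : ℕ) :
    altsum (m + 24) (k + 1) = altsum (m + 24) k + cubicDim m - altsum m k := by
  have hpascal := Finset.sum_choose_succ_mul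
    (fun j _ => (-1 : ℤ) ^ j * ((m + 24 + 3 - 24 * j).choose 3 : ℕ)) k
  have hshift (j : ℕ) : m + 24 + 3 - 24 * (j + 1) = m + 3 - 24 * j := by lia
  simp only [hshift, pow_succ, mul_one, neg_mul, mul_neg, Finset.sum_neg_distrib] at hpascal
  rw [← cubicDim_sub_altsum, ← cubicDim_sub_altsum, ← cubicDim_sub_altsum] at hpascal
  linarith

theorem virtualDim_add_virtualDim (m k c t a : ℕ) :
    virtualDim m k c a + virtualDim (m + 24) (k + 1) t c =
      virtualDim (m + 24) k (c + t) (a + c) + cubicDim m := by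
  simp only [virtualDim, altsum_succ]
  push_cast
  ring

theorem virtualDim_zero (n s a : ℕ) : virtualDim n 0 s a = s * (2 * n + 1) := by
  rw [virtualDim, altsum_zero]
  push_cast
  ring

theorem expdimZ_eq {n s k a : ℕ} {b : Fin 3 → ℕ}
    (hb : ∀ i : Fin 3, b i = if (i : ℕ) < k then a else 0) (hk : k ≤ 3) (ha : a ≠ 0) :
    expdimZ n s b = min (virtualDim n k s a) (cubicDim n) := by
  have hcount : kcount b = k := by
    interval_cases k <;> simp [kcount, hb, ha, Finset.filter, Fin.univ_succ]
  have hsum : b 0 + b 1 + b 2 = k * a := by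
    simp only [hb]
    interval_cases k <;> simp <;> ring
  rw [expdimZ, hcount, hsum]
  simp [virtualDim, cubicDim]

/-! ### Attaining the expected dimension -/

/-- Both vectors of the point `P` lie in `U_i`, with blocks numbered from `0`. -/
def TangentPoint.MemU {n : ℕ} (i : Fin 3) (P : TangentPoint n) : Prop :=
  memU i P.1 ∧ memU i P.2

/-- Some choice of `s` points and of `a` further points in each of the first `k` blocks spans at
least the expected dimension, as `T(n, s; a, …, a, 0, …, 0)` asserts when `a ≠ 0`. Counting the
active blocks by `k`, even when `a = 0`, makes the inductive step uniform in `k`. -/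
def AttainsExpectedDim (n k s a : ℕ) : Prop :=
  ∃ (ℓ : Fin s → TangentPoint n) (p : Fin 3 → Fin a → TangentPoint n),
    (∀ i : Fin 3, (i : ℕ) < k → ∀ j, TangentPoint.MemU i (p i j)) ∧
    min (virtualDim n k s a) (cubicDim n) ≤
      Module.finrank ℂ ↥(blockSpace k p ⊔ tangentSum 3 ℓ)

section Attains

variable {m n k s a : ℕ}

theorem TangentPoint.memU_iff_exists_extendPoint {k : Fin 3} (hm : 24 * (k : ℕ) ≤ m + 1)
    {P : TangentPoint (m + 24)} :
    TangentPoint.MemU k P ↔ ∃ Q, extendPoint (skipBlock m k) Q = P := by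
  rw [TangentPoint.MemU, memU_iff_exists_extend_skipBlock hm, memU_iff_exists_extend_skipBlock hm]
  constructor
  · rintro ⟨⟨u, hu⟩, v, hv⟩
    exact ⟨(u, v), Prod.ext hu hv⟩
  · rintro ⟨Q, rfl⟩
    exact ⟨⟨Q.1, rfl⟩, Q.2, rfl⟩

theorem blockSpace_sup_tangentSum_le_homogeneousSubmodule {ι κ : Type*}
    (p : Fin 3 → ι → TangentPoint n) (ℓ : κ → TangentPoint n) :
    blockSpace k p ⊔ tangentSum 3 ℓ ≤ homogeneousSubmodule (Fin (n + 1)) ℂ 3 :=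
  sup_le (blockSpace_le_homogeneousSubmodule k p)
    (tangentSum_le_homogeneousSubmodule (by simp) ℓ)

theorem finrank_blockSpace_sup_tangentSum_le (p : Fin 3 → Fin a → TangentPoint n)
    (ℓ : Fin s → TangentPoint n) :
    (Module.finrank ℂ ↥(blockSpace k p ⊔ tangentSum 3 ℓ) : ℤ) ≤ cubicDim n := by
  rw [cubicDim, ← finrank_homogeneousSubmodule, Nat.cast_le]
  exact Submodule.finrank_mono (blockSpace_sup_tangentSum_le_homogeneousSubmodule p ℓ)

theorem Wspace_eq {b : Fin 3 → ℕ} (hb : ∀ i : Fin 3, b i = if (i : ℕ) < k then a else 0)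
    (ha : a ≠ 0) {ℓ m : Fin s → Fin (n + 1) → ℂ}
    {ℓ' m' : (i : Fin 3) → Fin (b i) → Fin (n + 1) → ℂ} {p : Fin 3 → Fin a → TangentPoint n}
    (hp : ∀ (i : Fin 3) (hi : b i = a) (j), p i (Fin.cast hi j) = (ℓ' i j, m' i j)) :
    Wspace ℓ m ℓ' m' = blockSpace k p ⊔ tangentSum 3 fun j => (ℓ j, m j) := by
  rw [Wspace, iSup_subtype]
  refine congrArg₂ _ (iSup_congr fun i => ?_) rfl
  refine iSup_congr_Prop (by simp [hb, ha]) fun hi => congrArg₂ _ rfl ?_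
  have hba : b i = a := by rw [hb, if_pos hi]
  exact (finCongr hba).iSup_congr fun j => by rw [finCongr_apply, hp]

theorem TStmt.attainsExpectedDim {b : Fin 3 → ℕ} (h : TStmt n s b)
    (hb : ∀ i : Fin 3, b i = if (i : ℕ) < k then a else 0) (hk : k ≤ 3) (ha : a ≠ 0) :
    AttainsExpectedDim n k s a := by
  obtain ⟨ℓ, m, ℓ', m', hmem, hdim⟩ := h
  let p (i : Fin 3) (j : Fin a) : TangentPoint n :=
    if hi : b i = a then (ℓ' i (Fin.cast hi.symm j), m' i (Fin.cast hi.symm j)) else 0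
  refine ⟨fun j => (ℓ j, m j), p, fun i hi j => ?_, ?_⟩
  · have hba : b i = a := by rw [hb, if_pos hi]
    simp only [p, dif_pos hba]
    exact hmem i _
  · rw [← Wspace_eq hb ha (ℓ' := ℓ') (m' := m') fun i hi j => by simp [p, hi], hdim,
      expdimZ_eq hb hk ha]

theorem AttainsExpectedDim.tStmt (h : AttainsExpectedDim n 0 s a) : TStmt n s ![0, 0, 0] := by
  obtain ⟨ℓ, p, -, hdim⟩ := h
  have hb (i : Fin 3) : ![0, 0, 0] i = if (i : ℕ) < 0 then 1 else 0 := by fin_cases i <;> rfl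
  refine ⟨fun j => (ℓ j).1, fun j => (ℓ j).2, fun _ _ => 0, fun _ _ => 0,
    fun _ _ => ⟨fun _ _ _ => rfl, fun _ _ _ => rfl⟩, ?_⟩
  rw [expdimZ_eq hb (Nat.zero_le _) one_ne_zero, Wspace_eq hb one_ne_zero (p := fun _ _ => 0)
    fun _ _ _ => rfl]
  have hupper := finrank_tangentSum_le (d := 3) (by simp) ℓ
  have hfull := finrank_blockSpace_sup_tangentSum_le (k := 0) p ℓ
  rw [blockSpace_zero, bot_sup_eq] at hdim hfull ⊢
  rw [virtualDim_zero] at hdim ⊢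
  rw [Fintype.card_fin] at hupper
  exact le_antisymm (le_min (mod_cast hupper) hfull) hdim

end Attains

/-! ### Going up by one block, or by any number of variables -/

section Step

variable {m n : ℕ}

theorem exists_finrank_blockSpace_add_le {k : Fin 3} (hm : 24 * (k : ℕ) ≤ m + 1) {a c t : ℕ}
    (p₁ : Fin 3 → Fin a → TangentPoint m) (ℓ₁ : Fin c → TangentPoint m)
    (p₂ : Fin 3 → Fin c → TangentPoint (m + 24)) (ℓ₂ : Fin t → TangentPoint (m + 24))
    (hp₂ : ∀ j, TangentPoint.MemU k (p₂ k j)) :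
    ∃ r : Fin c → TangentPoint m,
      Module.finrank ℂ ↥(blockSpace k p₁ ⊔ tangentSum 3 ℓ₁) +
          Module.finrank ℂ ↥(blockSpace (k + 1) p₂ ⊔ tangentSum 3 ℓ₂) ≤
        Module.finrank ℂ ↥(blockSpace k (fun i =>
            Fin.append (extendPoint (skipBlock m k) ∘ p₁ i) (p₂ i)) ⊔
          tangentSum 3 (Fin.append (extendPoint (skipBlock m k) ∘ r) ℓ₂)) +
        (m + 3).choose 3 := by
  let e := extendPoint (skipBlock m k)
  have hinj := skipBlock_injective m k
  choose q hq using fun j => (TangentPoint.memU_iff_exists_extendPoint hm).mp (hp₂ j)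
  obtain ⟨r, hr₁, hr₂⟩ := exists_finrank_sup_tangentSum_le_and_le 3 (blockSpace k p₁)
    (blockSpace k p₂ ⊔ tangentSum 3 ℓ₂ ⊔ S3U k) e ℓ₁ q
  refine ⟨r, ?_⟩
  have hsecond : blockSpace (k + 1) p₂ ⊔ tangentSum 3 ℓ₂ =
      blockSpace k p₂ ⊔ tangentSum 3 ℓ₂ ⊔ S3U k ⊔ tangentSum 3 (e ∘ q) := by
    rw [blockSpace_succ, show e ∘ q = p₂ k from funext hq]
    ac_rfl
  rw [hsecond, ← finrank_S3U hm, blockSpace_append, tangentSum_append]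
  rw [← finrank_map_rename hinj (blockSpace k p₁ ⊔ tangentSum 3 r)] at hr₁
  refine (add_le_add hr₁ hr₂).trans
    (finrank_add_finrank_le_of_le_inf_of_le_sup (le_inf ?_ ?_) ?_)
  · rw [Submodule.map_sup]
    exact sup_le_sup
      ((map_rename_blockSpace_le hinj (fun i hi _ => memU_extend_skipBlock_of_lt hi) p₁).trans
        le_sup_left)
      ((map_rename_tangentSum_le hinj 3 r).trans le_sup_left)
  · rw [S3U_eq_map_rename hm]
    exact Submodule.map_mono (blockSpace_sup_tangentSum_le_homogeneousSubmodule p₁ r)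
  · exact sup_le (sup_le_sup_right (sup_le_sup le_sup_right le_sup_right) _)
      (le_sup_of_le_left (le_sup_of_le_right le_sup_left))

theorem AttainsExpectedDim.step {k : Fin 3} (hm : 24 * (k : ℕ) ≤ m + 1) {a c t : ℕ}
    (h₁ : AttainsExpectedDim m k c a) (h₂ : AttainsExpectedDim (m + 24) (k + 1) t c)
    (hside : virtualDim m k c a ≤ cubicDim m ∧
        virtualDim (m + 24) (k + 1) t c ≤ cubicDim (m + 24) ∨
      cubicDim m ≤ virtualDim m k c a ∧
        cubicDim (m + 24) ≤ virtualDim (m + 24) (k + 1) t c) :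
    AttainsExpectedDim (m + 24) k (c + t) (a + c) := by
  obtain ⟨ℓ₁, p₁, hp₁, hdim₁⟩ := h₁
  obtain ⟨ℓ₂, p₂, hp₂, hdim₂⟩ := h₂
  obtain ⟨r, hr⟩ := exists_finrank_blockSpace_add_le hm p₁ ℓ₁ p₂ ℓ₂ (hp₂ k (Nat.lt_succ_self _))
  refine ⟨Fin.append (extendPoint (skipBlock m k) ∘ r) ℓ₂,
    fun i => Fin.append (extendPoint (skipBlock m k) ∘ p₁ i) (p₂ i), fun i hi j => ?_, ?_⟩
  · beta_reduce
    induction j using Fin.addCases with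
    | left j =>
      rw [Fin.append_left]
      exact ⟨memU_extend_skipBlock_of_lt hi (hp₁ i hi j).1,
        memU_extend_skipBlock_of_lt hi (hp₁ i hi j).2⟩
    | right j =>
      rw [Fin.append_right]
      exact hp₂ i (Nat.lt_succ_of_lt hi) j
  · have hmin : min (virtualDim (m + 24) k (c + t) (a + c)) (cubicDim (m + 24)) + cubicDim m ≤
        min (virtualDim m k c a) (cubicDim m) +
          min (virtualDim (m + 24) (k + 1) t c) (cubicDim (m + 24)) := by
      have hadd := virtualDim_add_virtualDim m k c t a
      lia
    zify at hr
    rw [← cubicDim] at hr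
    linarith

theorem memU_extend_castLE (h : m + 1 ≤ n + 1) {i : Fin 3} {v : Fin (m + 1) → ℂ}
    (hv : memU i v) : memU i (Function.extend (Fin.castLE h) v 0) := by
  intro j h₁ h₂
  by_cases hj : j ∈ Set.range (Fin.castLE h)
  · obtain ⟨l, rfl⟩ := hj
    rw [(Fin.castLE_injective h).extend_apply]
    exact hv l h₁ h₂
  · exact Function.extend_apply' _ _ _ hj

theorem memU_single {i : Fin 3} {j : Fin (n + 1)} (hj : (j : ℕ) / 24 ≠ i) :
    memU i (Pi.single j (1 : ℂ)) := by
  intro l h₁ h₂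
  refine Pi.single_eq_of_ne ?_ _
  rintro rfl
  lia

theorem X_mul_X_mul_X_mem_S3U {i : Fin 3} {a b c : Fin (n + 1)} (ha : (a : ℕ) / 24 ≠ i)
    (hb : (b : ℕ) / 24 ≠ i) (hc : (c : ℕ) / 24 ≠ i) : X a * X b * X c ∈ S3U (n := n) i :=
  Submodule.subset_span ⟨_, _, _, memU_single ha, memU_single hb, memU_single hc,
    by simp only [lin_single]⟩

/-- A cubic monomial involving a variable outside the three blocks misses one of the blocks. -/
theorem homogeneousSubmodule_le_of_forall_S3U_le (hm : 71 ≤ m) (h : m + 1 ≤ n + 1)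
    {W : Submodule ℂ (MvPolynomial (Fin (n + 1)) ℂ)}
    (hmap : (homogeneousSubmodule (Fin (m + 1)) ℂ 3).map
      (rename (Fin.castLE h)).toLinearMap ≤ W)
    (hS3U : ∀ i : Fin 3, S3U i ≤ W) : homogeneousSubmodule (Fin (n + 1)) ℂ 3 ≤ W := by
  refine homogeneousSubmodule_three_le fun a b c => ?_
  by_cases hsmall : (a : ℕ) ≤ m ∧ (b : ℕ) ≤ m ∧ (c : ℕ) ≤ m
  · obtain ⟨ha, hb, hc⟩ := hsmall
    let restrict (j : Fin (n + 1)) (hj : (j : ℕ) ≤ m) : Fin (m + 1) := ⟨j, Nat.lt_succ_of_le hj⟩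
    refine hmap ⟨X (restrict a ha) * X (restrict b hb) * X (restrict c hc),
      ((isHomogeneous_X ℂ _).mul (isHomogeneous_X ℂ _)).mul (isHomogeneous_X ℂ _), ?_⟩
    simp [restrict]
  · obtain ⟨i, ha, hb, hc⟩ :
        ∃ i : Fin 3, (a : ℕ) / 24 ≠ i ∧ (b : ℕ) / 24 ≠ i ∧ (c : ℕ) / 24 ≠ i := by
      by_contra! hhit
      have h₀ := hhit 0
      have h₁ := hhit 1
      have h₂ := hhit 2
      simp only [Fin.val_zero, Fin.val_one, Fin.val_two] at h₀ h₁ h₂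
      lia
    exact hS3U i (X_mul_X_mul_X_mem_S3U ha hb hc)

theorem AttainsExpectedDim.mono {s a : ℕ} (hm : 71 ≤ m) (hmn : m ≤ n)
    (h : AttainsExpectedDim m 3 s a) (hfull : cubicDim m ≤ virtualDim m 3 s a) :
    AttainsExpectedDim n 3 s a := by
  obtain ⟨ℓ, p, hp, hdim⟩ := h
  rw [min_eq_right hfull, cubicDim, ← finrank_homogeneousSubmodule, Nat.cast_le] at hdim
  have htop := Submodule.eq_of_le_of_finrank_le
    (blockSpace_sup_tangentSum_le_homogeneousSubmodule p ℓ) hdim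
  have hle := Nat.succ_le_succ hmn
  have hinj := Fin.castLE_injective hle
  let e := extendPoint (Fin.castLE hle)
  refine ⟨e ∘ ℓ, fun i => e ∘ p i, fun i hi j =>
    ⟨memU_extend_castLE hle (hp i hi j).1, memU_extend_castLE hle (hp i hi j).2⟩,
    (min_le_right _ _).trans ?_⟩
  rw [cubicDim, ← finrank_homogeneousSubmodule, Nat.cast_le]
  refine Submodule.finrank_mono (homogeneousSubmodule_le_of_forall_S3U_le hm hle ?_ fun i => ?_)
  · rw [← htop, Submodule.map_sup]
    exact sup_le_sup (map_rename_blockSpace_le hinj (fun _ _ _ => memU_extend_castLE hle) p)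
      (map_rename_tangentSum_le hinj 3 ℓ)
  · exact le_sup_of_le_left (le_iSup₂_of_le i i.isLt le_sup_left)

end Step

/-! ### Numerical facts -/

theorem six_mul_choose_three (n : ℕ) : 6 * ((n + 2).choose 3 : ℤ) = n * (n + 1) * (n + 2) := by
  have h₃ := Nat.add_one_mul_choose_eq (n + 1) 2
  have h₂ := Nat.add_one_mul_choose_eq n 1
  rw [Nat.choose_one_right] at h₂
  zify at h₂ h₃
  linear_combination -2 * h₃ - (n + 2 : ℤ) * h₂

theorem six_mul_cubicDim (n : ℕ) : 6 * cubicDim n = (n + 1) * (n + 2) * (n + 3) := by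
  have h := six_mul_choose_three (n + 1)
  push_cast at h
  rw [cubicDim]
  linear_combination h

theorem tfun_add_24 (n : ℕ) : tfun (n + 24) = 4 * n + 59 := by
  rw [tfun]
  lia

theorem altsum_add_24_one (n : ℕ) : altsum (n + 24) 1 = cubicDim n := by
  rw [altsum_succ, altsum_zero, altsum_zero, zero_add, sub_zero]

theorem virtualDim_two (n : ℕ) :
    virtualDim (n + 48) 2 96 (tfun (n + 24)) = cubicDim (n + 48) := by
  have h₀ := six_mul_cubicDim n
  have h₁ := six_mul_cubicDim (n + 24)
  have h₂ := six_mul_cubicDim (n + 48)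
  have halt : altsum (n + 48) 2 = 2 * cubicDim (n + 24) - cubicDim n := by
    rw [altsum_succ (n + 24) 1, altsum_add_24_one, altsum_add_24_one]
    ring
  rw [virtualDim, halt, tfun_add_24]
  push_cast at h₁ h₂ ⊢
  linarith

/-- The third difference of `cubicDim` with step `24` is `24 ^ 3 = 48 * (3 * 96)`. -/
theorem virtualDim_three (n : ℕ) : virtualDim (n + 71) 3 0 96 = cubicDim (n + 71) := by
  have h₁ := six_mul_cubicDim (n + 23)
  have h₂ := six_mul_cubicDim (n + 47)
  have h₃ := six_mul_cubicDim (n + 71)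
  have h₀ := six_mul_choose_three n
  have hone : altsum (n + 23) 1 = ((n + 2).choose 3 : ℕ) := by
    rw [altsum, Finset.Icc_self, Finset.sum_singleton, show n + 23 + 3 - 24 * 1 = n + 2 by lia]
    simp
  have halt : altsum (n + 71) 3 =
      3 * cubicDim (n + 47) - 3 * cubicDim (n + 23) + ((n + 2).choose 3 : ℕ) := by
    rw [altsum_succ (n + 47) 2, altsum_succ (n + 47) 1, altsum_succ (n + 23) 1,
      altsum_add_24_one (n + 47), altsum_add_24_one (n + 23), hone]
    ring
  rw [virtualDim, halt]
  push_cast at h₁ h₂ h₃ ⊢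
  linarith

/-- Both comparisons come down to comparing `48 * s` with `4n² + 22n + 33`, which explains the floor
in `s_1`. -/
theorem virtualDim_zero_one_same_side {n : ℕ} (hn : 8 ≤ n) (s a : ℕ) :
    virtualDim n 0 s a ≤ cubicDim n ∧
        virtualDim (n + 24) 1 (tfun (n + 24)) s ≤ cubicDim (n + 24) ∨
      cubicDim n ≤ virtualDim n 0 s a ∧
        cubicDim (n + 24) ≤ virtualDim (n + 24) 1 (tfun (n + 24)) s := by
  have h₀ : 48 * cubicDim n = (4 * n ^ 2 + 22 * n + 33) * (2 * n + 1) + 15 := by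
    linear_combination 8 * six_mul_cubicDim n
  have h₁ : cubicDim (n + 24) =
      cubicDim n + (4 * n ^ 2 + 22 * n + 33) + (2 * n + 49) * (4 * n + 59) := by
    have h := six_mul_cubicDim (n + 24)
    push_cast at h
    linarith [six_mul_cubicDim n]
  rw [virtualDim_zero, virtualDim, altsum_add_24_one, tfun_add_24, h₁]
  push_cast
  rcases le_or_gt (48 * (s : ℤ)) (4 * n ^ 2 + 22 * n + 33) with hs | hs
  · left
    constructor <;> nlinarith
  · right
    constructor <;> nlinarith

theorem s1_add_24 (n : ℕ) : s1 (n + 24) = s1 n + tfun (n + 24) := by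
  have hdiv : (n + 24) / 24 = n / 24 + 1 := by lia
  have hmod : (n + 24) % 24 = n % 24 := by lia
  have ht : tfun (n + 24) = 4 * (24 * (n / 24) + n % 24) + 59 := by
    rw [tfun_add_24, Nat.div_add_mod]
  rw [ht, s1, s1, hdiv, hmod]
  ring

theorem s1_pos {n : ℕ} (hn : 8 ≤ n) : 0 < s1 n := by
  rw [s1]
  rcases lt_or_ge n 24 with h | h
  · have hmod : n % 24 = n := Nat.mod_eq_of_lt h
    have : 1 ≤ (4 * (n % 24) ^ 2 + 22 * (n % 24) + 33) / 48 := by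
      rw [hmod, Nat.le_div_iff_mul_le (by lia)]
      nlinarith
    lia
  · have : 1 ≤ n / 24 := by lia
    positivity

/-! ### The three nested inductions -/

theorem le_induction_add {P : ℕ → Prop} {a d : ℕ} (hd : 0 < d)
    (base : ∀ n, a ≤ n → n < a + d → P n) (step : ∀ n, a ≤ n → P n → P (n + d))
    (n : ℕ) (hn : a ≤ n) : P n := by
  induction n using Nat.strong_induction_on with
  | h n ih =>
    rcases lt_or_ge n (a + d) with hlt | hge
    · exact base n hn hlt
    · have hstep := step (n - d) (by lia) (ih (n - d) (by lia) (by lia))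
      rwa [Nat.sub_add_cancel (by lia)] at hstep

theorem attainsExpectedDim_three (ha : TStmt 71 0 ![96, 96, 96]) (n : ℕ) (hn : 71 ≤ n) :
    AttainsExpectedDim n 3 0 96 :=
  (ha.attainsExpectedDim (fun i => by fin_cases i <;> rfl) le_rfl (by simp)).mono le_rfl hn
    (virtualDim_three 0).ge

theorem attainsExpectedDim_two (h₃ : ∀ n, 71 ≤ n → AttainsExpectedDim n 3 0 96)
    (hb : ∀ n, 56 ≤ n → n ≤ 79 → TStmt n 96 ![tfun (n - 24), tfun (n - 24), 0]) :
    ∀ n, 8 ≤ n → AttainsExpectedDim (n + 48) 2 96 (tfun (n + 24)) := by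
  refine le_induction_add (d := 24) (by simp) (fun n hn hlt => ?_) fun n _ h => ?_
  · exact (hb (n + 48) (by lia) (by lia)).attainsExpectedDim (fun i => by fin_cases i <;> rfl)
      (by simp) (by rw [tfun_add_24]; lia)
  · have hstep := h.step (k := 2) (by simp) (h₃ (n + 72) (by lia))
      (.inl ⟨(virtualDim_two n).le, (virtualDim_three (n + 1)).le⟩)
    rwa [show tfun (n + 24 + 24) = tfun (n + 24) + 96 by simp only [tfun_add_24]; lia]

theorem attainsExpectedDim_one {s : ℕ → ℕ}
    (hs : ∀ n, 8 ≤ n → s (n + 24) = s n + tfun (n + 24))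
    (hpos : ∀ n, 8 ≤ n → n ≤ 31 → s n ≠ 0)
    (h₂ : ∀ n, 8 ≤ n → AttainsExpectedDim (n + 48) 2 96 (tfun (n + 24)))
    (hc : ∀ n, 32 ≤ n → n ≤ 55 → TStmt n (tfun n) ![s (n - 24), 0, 0]) :
    ∀ n, 8 ≤ n → AttainsExpectedDim (n + 24) 1 (tfun (n + 24)) (s n) := by
  refine le_induction_add (d := 24) (by simp) (fun n hn hlt => ?_) fun n hn h => ?_
  · exact (hc (n + 24) (by lia) (by lia)).attainsExpectedDim (fun i => by fin_cases i <;> rfl)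
      (by simp) (hpos n hn (by lia))
  · have hfull := virtualDim_two n
    have hstep := h.step (k := 1) (by simp) (h₂ n hn) <|
      (le_total (virtualDim (n + 24) 1 (tfun (n + 24)) (s n)) (cubicDim (n + 24))).imp
        (⟨·, hfull.le⟩) (⟨·, hfull.ge⟩)
    rwa [hs n hn, show tfun (n + 24 + 24) = tfun (n + 24) + 96 by simp only [tfun_add_24]; lia]

theorem base_cases_imply_all_general (s : ℕ → ℕ)
    (hs : ∀ n, 8 ≤ n → s (n + 24) = s n + tfun (n + 24))
    (hpos : ∀ n, 8 ≤ n → n ≤ 31 → s n ≠ 0)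
    (ha : TStmt 71 0 ![96, 96, 96])
    (hb : ∀ n, 56 ≤ n → n ≤ 79 → TStmt n 96 ![tfun (n - 24), tfun (n - 24), 0])
    (hc : ∀ n, 32 ≤ n → n ≤ 55 → TStmt n (tfun n) ![s (n - 24), 0, 0])
    (hd : ∀ n, 8 ≤ n → n ≤ 31 → TStmt n (s n) ![0, 0, 0]) :
    ∀ n, 8 ≤ n → TStmt n (s n) ![0, 0, 0] := by
  have h₃ := attainsExpectedDim_three ha
  have h₂ := attainsExpectedDim_two h₃ hb
  have h₁ := attainsExpectedDim_one hs hpos h₂ hc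
  refine le_induction_add (d := 24) (by simp) (fun n hn hlt => hd n hn (by lia)) fun n hn h => ?_
  have h₀ : AttainsExpectedDim n 0 (s n) 1 :=
    h.attainsExpectedDim (fun i => by fin_cases i <;> rfl) (Nat.zero_le 3) one_ne_zero
  rw [hs n hn]
  exact (h₀.step (k := 0) (by simp) (h₁ n hn) (virtualDim_zero_one_same_side hn _ _)).tStmt

/-- Corollary 3.8: the base cases (a)–(d) imply that `T(n, s_i(n); 0, 0, 0)` is true for
every `n ≥ 8`. -/
theorem base_cases_imply_all (si : ℕ → ℕ) (hsi : si = s1 ∨ si = s2)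
    (ha : TStmt 71 0 ![96, 96, 96])
    (hb : ∀ n, 56 ≤ n → n ≤ 79 → TStmt n 96 ![tfun (n - 24), tfun (n - 24), 0])
    (hc : ∀ n, 32 ≤ n → n ≤ 55 → TStmt n (tfun n) ![si (n - 24), 0, 0])
    (hd : ∀ n, 8 ≤ n → n ≤ 31 → TStmt n (si n) ![0, 0, 0]) :
    ∀ n, 8 ≤ n → TStmt n (si n) ![0, 0, 0] := by
  refine base_cases_imply_all_general si ?_ ?_ ha hb hc hd <;> rcases hsi with rfl | rfl
  · exact fun n _ => s1_add_24 n
  · exact fun n _ => by rw [s2, s1_add_24, s2, add_right_comm]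
  · exact fun n hn _ => (s1_pos hn).ne'
  · exact fun n _ _ => Nat.succ_ne_zero _
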